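/- arXiv:2403.03827 — 2 statements merged into one kernel-verified Lean document; each statement's English description precedes it below -/
import Mathlib

section
/- Let f : ℝⁿ → ℝ, let τ > 0, and let r : ℝⁿ → ℝ be separable, r(x) = Σᵢ rᵢ(xᵢ), where each rᵢ : ℝ → ℝ is convex, satisfies rᵢ(0) = 0, and rᵢ(t) ≥ 0 for all t ≥ 0. Define g(y,z) = f(y − z) + τ·Σᵢ(yᵢ + zᵢ) + r(y) + r(−z). If (y*, z*) minimizes g over the set {(y,z) : y ≥ 0, z ≥ 0}, then x* := y* − z* minimizes f(x) + τ‖x‖₁ + r(x) over all x ∈ ℝⁿ. -/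
/-!
Absorb the `ℓ¹` term into the separable part: with `φᵢ t = τ|t| + rᵢ t`, which is convex, the split
objective is `f (y - z) + Σᵢ (φᵢ (yᵢ) + φᵢ (-zᵢ))` on the nonnegative orthant. For `y, z ≥ 0` both
`y - z` and `0` lie in `[-z, y]` and add up to `y + (-z)`, so convexity gives
`φ (y - z) + φ 0 ≤ φ y + φ (-z)`, with equality when `y = x⁺` and `z = x⁻`. Up to the constant
`Σᵢ φᵢ 0`, the split objective therefore dominates the original one at `y - z`, and attains it at
`(x⁺, x⁻)`.
-/

theorem convexOn_map_add_map_le {𝕜 E β : Type*} [Semiring 𝕜] [PartialOrder 𝕜]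
    [AddCommGroup E] [Module 𝕜 E] [AddCommMonoid β] [PartialOrder β] [IsOrderedAddMonoid β]
    [Module 𝕜 β] {s : Set E} {φ : E → β} (hφ : ConvexOn 𝕜 s φ) {a b x x' : E}
    (ha : a ∈ s) (hb : b ∈ s) (hx : x ∈ segment 𝕜 a b) (hsum : x + x' = a + b) :
    φ x + φ x' ≤ φ a + φ b := by
  obtain ⟨p, q, hp, hq, hpq, rfl⟩ := hx
  have hqp : q + p = 1 := by rw [add_comm, hpq]
  have reflected : x' = q • a + p • b := by
    apply add_left_cancel (a := p • a + q • b)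
    rw [hsum, add_add_add_comm, ← add_smul, ← add_smul, hpq, hqp, one_smul, one_smul]
  calc φ (p • a + q • b) + φ x'
      ≤ (p • φ a + q • φ b) + (q • φ a + p • φ b) := by
        rw [reflected]
        exact add_le_add (hφ.2 ha hb hp hq hpq) (hφ.2 ha hb hq hp hqp)
    _ = φ a + φ b := by
        rw [add_add_add_comm, ← add_smul, ← add_smul, hpq, hqp, one_smul, one_smul]

theorem convexOn_map_sub_add_map_zero_le {𝕜 β : Type*} [Field 𝕜] [LinearOrder 𝕜]
    [IsStrictOrderedRing 𝕜] [AddCommMonoid β] [PartialOrder β] [IsOrderedAddMonoid β]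
    [Module 𝕜 β] {φ : 𝕜 → β} (hφ : ConvexOn 𝕜 Set.univ φ) {y z : 𝕜}
    (hy : 0 ≤ y) (hz : 0 ≤ z) : φ (y - z) + φ 0 ≤ φ y + φ (-z) := by
  have sub_mem : y - z ∈ segment 𝕜 y (-z) := by
    rw [segment_symm, segment_eq_Icc (by linarith)]
    constructor <;> linarith
  exact convexOn_map_add_map_le hφ (Set.mem_univ y) (Set.mem_univ (-z)) sub_mem (by ring)

theorem convexOn_abs {𝕜 : Type*} [Ring 𝕜] [LinearOrder 𝕜] [IsStrictOrderedRing 𝕜] {s : Set 𝕜}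
    (hs : Convex 𝕜 s) : ConvexOn 𝕜 s (fun t ↦ |t|) :=
  (convexOn_id hs).sup (concaveOn_id hs).neg

theorem map_posPart_add_map_neg_negPart {α β : Type*} [AddCommGroup α] [LinearOrder α]
    [IsOrderedAddMonoid α] [AddCommMonoid β] (φ : α → β) (x : α) :
    φ x⁺ + φ (-x⁻) = φ x + φ 0 := by
  rcases le_total 0 x with hx | hx
  · rw [posPart_of_nonneg hx, negPart_of_nonneg hx, neg_zero]
  · rw [posPart_of_nonpos hx, negPart_of_nonpos hx, neg_neg, add_comm]

section Splitting

variable {ι α β : Type*} [Fintype ι]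

/-- The objective `f x + Σᵢ φᵢ (xᵢ)`, a sum of an arbitrary term and a separable one. -/
def separableObjective [AddCommMonoid β] (f : (ι → α) → β) (φ : ι → α → β) (x : ι → α) : β :=
  f x + ∑ i, φ i (x i)

/-- The objective obtained from `separableObjective f φ` by writing the variable as a difference
`y - z` and evaluating the separable term at `y` and at `-z` separately. It is meant for
`y, z ≥ 0`, but is defined for all `y` and `z`. -/
def splitObjective [AddGroup α] [AddCommMonoid β] (f : (ι → α) → β) (φ : ι → α → β)
    (y z : ι → α) : β :=
  f (y - z) + ∑ i, (φ i (y i) + φ i (-z i))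

theorem splitObjective_posPart_negPart [AddCommGroup α] [LinearOrder α] [IsOrderedAddMonoid α]
    [AddCommMonoid β] (f : (ι → α) → β) (φ : ι → α → β) (x : ι → α) :
    splitObjective f φ x⁺ x⁻ = separableObjective f φ x + ∑ i, φ i 0 := by
  simp only [splitObjective, separableObjective, posPart_sub_negPart, Pi.posPart_apply,
    Pi.negPart_apply, map_posPart_add_map_neg_negPart, Finset.sum_add_distrib, add_assoc]

variable {𝕜 : Type*} [Field 𝕜] [LinearOrder 𝕜] [IsStrictOrderedRing 𝕜]

theorem separableObjective_sub_add_le_splitObjective [AddCommMonoid β] [PartialOrder β]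
    [IsOrderedAddMonoid β] [Module 𝕜 β] (f : (ι → 𝕜) → β) {φ : ι → 𝕜 → β}
    (hφ : ∀ i, ConvexOn 𝕜 Set.univ (φ i))
    {y z : ι → 𝕜} (hy : 0 ≤ y) (hz : 0 ≤ z) :
    separableObjective f φ (y - z) + ∑ i, φ i 0 ≤ splitObjective f φ y z := by
  rw [separableObjective, splitObjective, add_assoc, ← Finset.sum_add_distrib]
  gcongr _ + ?_
  exact Finset.sum_le_sum fun i _ ↦ convexOn_map_sub_add_map_zero_le (hφ i) (hy i) (hz i)

theorem separableObjective_sub_le_of_splitObjective_le [AddCommGroup β] [PartialOrder β]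
    [IsOrderedAddMonoid β] [Module 𝕜 β] (f : (ι → 𝕜) → β) {φ : ι → 𝕜 → β}
    (hφ : ∀ i, ConvexOn 𝕜 Set.univ (φ i))
    {y z : ι → 𝕜} (hy : 0 ≤ y) (hz : 0 ≤ z)
    (hmin : ∀ y' z', 0 ≤ y' → 0 ≤ z' → splitObjective f φ y z ≤ splitObjective f φ y' z')
    (x : ι → 𝕜) : separableObjective f φ (y - z) ≤ separableObjective f φ x := by
  apply le_of_add_le_add_right (a := ∑ i, φ i 0)
  calc separableObjective f φ (y - z) + ∑ i, φ i 0
      ≤ splitObjective f φ y z := separableObjective_sub_add_le_splitObjective f hφ hy hz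
    _ ≤ splitObjective f φ x⁺ x⁻ := hmin _ _ (posPart_nonneg x) (negPart_nonneg x)
    _ = separableObjective f φ x + ∑ i, φ i 0 := splitObjective_posPart_negPart f φ x

end Splitting

theorem stmt_1_general {ι 𝕜 : Type*} [Fintype ι] [Field 𝕜] [LinearOrder 𝕜]
    [IsStrictOrderedRing 𝕜] (f : (ι → 𝕜) → 𝕜) {τ : 𝕜} (hτ : 0 ≤ τ) (r : ι → 𝕜 → 𝕜)
    (hconv : ∀ i, ConvexOn 𝕜 Set.univ (r i))
    (g : (ι → 𝕜) → (ι → 𝕜) → 𝕜)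
    (hg : ∀ y z, g y z =
      f (y - z) + τ * (∑ i, (y i + z i)) + (∑ i, r i (y i)) + (∑ i, r i (-(z i))))
    (F : (ι → 𝕜) → 𝕜)
    (hF : ∀ x, F x = f x + τ * (∑ i, |x i|) + (∑ i, r i (x i)))
    {y z : ι → 𝕜} (hy : 0 ≤ y) (hz : 0 ≤ z)
    (hmin : ∀ y' z', 0 ≤ y' → 0 ≤ z' → g y z ≤ g y' z') (x : ι → 𝕜) :
    F (y - z) ≤ F x := by
  let φ : ι → 𝕜 → 𝕜 := fun i t ↦ τ * |t| + r i t
  have hφ (i : ι) : ConvexOn 𝕜 Set.univ (φ i) := ((convexOn_abs convex_univ).smul hτ).add (hconv i)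
  have F_eq (x : ι → 𝕜) : F x = separableObjective f φ x := by
    simp only [hF, separableObjective, φ, Finset.sum_add_distrib, Finset.mul_sum, add_assoc]
  have g_eq {y z : ι → 𝕜} (hy : 0 ≤ y) (hz : 0 ≤ z) : g y z = splitObjective f φ y z := by
    have abs_y (i : ι) : |y i| = y i := abs_of_nonneg (hy i)
    have abs_z (i : ι) : |z i| = z i := abs_of_nonneg (hz i)
    simp only [hg, splitObjective, φ, abs_neg, abs_y, abs_z, Finset.sum_add_distrib,
      ← Finset.mul_sum]
    ring
  rw [F_eq, F_eq]
  refine separableObjective_sub_le_of_splitObjective_le f hφ hy hz (fun y' z' hy' hz' ↦ ?_) x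
  rw [← g_eq hy hz, ← g_eq hy' hz']
  exact hmin y' z' hy' hz'

/-- Lemma 1 (minimization part): if `(y*, z*)` minimizes
`g(y,z) = f(y-z) + τ·Σᵢ(yᵢ+zᵢ) + r(y) + r(-z)` over `{(y,z) : y ≥ 0, z ≥ 0}`,
where `r(x) = Σᵢ rᵢ(xᵢ)` with each `rᵢ` convex, `rᵢ(0) = 0`, `rᵢ(t) ≥ 0` for `t ≥ 0`,
then `x* := y* - z*` minimizes `f(x) + τ‖x‖₁ + r(x)` over `ℝⁿ`. -/
theorem stmt_1 (n : ℕ) (f : (Fin n → ℝ) → ℝ) (τ : ℝ) (hτ : 0 < τ)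
    (r : Fin n → ℝ → ℝ)
    (hconv : ∀ i, ConvexOn ℝ Set.univ (r i))
    (hzero : ∀ i, r i 0 = 0)
    (hnonneg : ∀ i (t : ℝ), 0 ≤ t → 0 ≤ r i t)
    (g : (Fin n → ℝ) → (Fin n → ℝ) → ℝ)
    (hg : ∀ y z, g y z =
      f (y - z) + τ * (∑ i, (y i + z i)) + (∑ i, r i (y i)) + (∑ i, r i (-(z i))))
    (F : (Fin n → ℝ) → ℝ)
    (hF : ∀ x, F x = f x + τ * (∑ i, |x i|) + (∑ i, r i (x i)))
    (ystar zstar : Fin n → ℝ)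
    (hy : ∀ i, 0 ≤ ystar i) (hz : ∀ i, 0 ≤ zstar i)
    (hmin : ∀ y z : Fin n → ℝ, (∀ i, 0 ≤ y i) → (∀ i, 0 ≤ z i) →
      g ystar zstar ≤ g y z) :
    ∀ x : Fin n → ℝ, F (ystar - zstar) ≤ F x := by
  exact stmt_1_general f hτ.le r hconv g hg F hF hy hz hmin
end

section
/- Let f : ℝⁿ → ℝ, let τ_g > 0 and ε > 0, and let J₁,…,J_{n_g} ⊆ {1,…,n} be index sets defining the group-Lasso penalty G(x) = Σᵢ₌₁^{n_g} ‖x_{Jᵢ}‖₂. If (y*, z*) minimizes f(y − z) + ε·Σᵢ(yᵢ + zᵢ) + τ_g·G(y + z) over the set {(y,z) : y ≥ 0, z ≥ 0}, then x* := y* − z* minimizes f(x) + ε‖x‖₁ + τ_g·G(x) over all x ∈ ℝⁿ. -/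
/-!
For `0 ≤ y, z` one has `|y - z| ≤ y + z`, with equality when `y` and `z` are the positive and
negative parts of `y - z`. Hence, for a penalty `P` that is monotone on nonnegative vectors, `P |x|`
is the least value of `P (y + z)` over the nonnegative splittings `x = y - z`. The `ℓ¹` and
group-Lasso penalties are monotone on nonnegative vectors and depend only on `|x|`.
-/

open Set

section Splitting

variable {E : Type*} [Lattice E] [AddCommGroup E] [AddLeftMono E]

theorem abs_sub_le_add_of_nonneg {y z : E} (hy : 0 ≤ y) (hz : 0 ≤ z) : |y - z| ≤ y + z := by
  refine abs_le'.2 ⟨?_, ?_⟩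
  · exact (sub_le_self y hz).trans (le_add_of_nonneg_right hz)
  · rw [neg_sub]
    exact (sub_le_self z hy).trans (le_add_of_nonneg_left hy)

theorem stmt_7_general {β : Type*} [Add β] [Preorder β] [AddLeftMono β] {f P : E → β}
    (hP : MonotoneOn P (Ici 0)) {y z : E} (hy : 0 ≤ y) (hz : 0 ≤ z)
    (hmin : IsMinOn (fun p : E × E ↦ f (p.1 - p.2) + P (p.1 + p.2)) (Ici 0) (y, z)) :
    IsMinOn (fun x ↦ f x + P |x|) univ (y - z) := by
  intro x _
  have hparts : (x⁺, x⁻) ∈ Ici (0 : E × E) := ⟨posPart_nonneg x, negPart_nonneg x⟩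
  calc f (y - z) + P |y - z|
      ≤ f (y - z) + P (y + z) := by
        gcongr
        exact hP (abs_nonneg _) (add_nonneg hy hz) (abs_sub_le_add_of_nonneg hy hz)
    _ ≤ f (x⁺ - x⁻) + P (x⁺ + x⁻) := hmin hparts
    _ = f x + P |x| := by rw [posPart_sub_negPart, posPart_add_negPart]

end Splitting

section GroupLasso

variable {ι κ : Type*} [Fintype κ]

/-- The group-Lasso penalty `∑ₖ ‖x_{Jₖ}‖₂`, with the Euclidean norm of each subvector written out
since `ι → ℝ` carries the sup norm. The groups `J k` may overlap and need not cover `ι`. -/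
noncomputable def groupLasso (J : κ → Finset ι) (x : ι → ℝ) : ℝ :=
  ∑ k, √(∑ j ∈ J k, x j ^ 2)

theorem groupLasso_abs (J : κ → Finset ι) (x : ι → ℝ) : groupLasso J |x| = groupLasso J x := by
  simp only [groupLasso, Pi.abs_apply, sq_abs]

theorem monotoneOn_groupLasso (J : κ → Finset ι) : MonotoneOn (groupLasso J) (Ici 0) := by
  intro u hu v _ huv
  unfold groupLasso
  gcongr with k _ j _
  · exact hu j
  · exact huv j

theorem monotoneOn_mul_sum_add_mul_groupLasso [Fintype ι] (J : κ → Finset ι) {ε τ : ℝ}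
    (hε : 0 ≤ ε) (hτ : 0 ≤ τ) :
    MonotoneOn (fun u : ι → ℝ ↦ ε * ∑ i, u i + τ * groupLasso J u) (Ici 0) := by
  intro u hu v hv huv
  have hlasso : groupLasso J u ≤ groupLasso J v := monotoneOn_groupLasso J hu hv huv
  dsimp only
  gcongr with i
  exact huv i

end GroupLasso

/-- Corollary 2 (group-Lasso): let `G(x) = Σᵢ ‖x_{Jᵢ}‖₂` be the group-Lasso
penalty defined by index sets `J₁,…,J_{n_g}`. If `(y*, z*)` minimizes
`f(y-z) + ε·Σᵢ(yᵢ+zᵢ) + τ_g·G(y+z)` over `{(y,z) : y ≥ 0, z ≥ 0}`,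
then `x* := y* - z*` minimizes `f(x) + ε‖x‖₁ + τ_g·G(x)` over `ℝⁿ`. -/
theorem stmt_7 (n ng : ℕ) (f : (Fin n → ℝ) → ℝ) (τg ε : ℝ)
    (hτg : 0 < τg) (hε : 0 < ε)
    (J : Fin ng → Finset (Fin n))
    (G : (Fin n → ℝ) → ℝ)
    (hG : ∀ x, G x = ∑ i, Real.sqrt (∑ j ∈ J i, (x j) ^ 2))
    (ystar zstar : Fin n → ℝ)
    (hy : ∀ i, 0 ≤ ystar i) (hz : ∀ i, 0 ≤ zstar i)
    (hmin : ∀ y z : Fin n → ℝ, (∀ i, 0 ≤ y i) → (∀ i, 0 ≤ z i) →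
      f (ystar - zstar) + ε * (∑ i, (ystar i + zstar i)) + τg * G (ystar + zstar) ≤
      f (y - z) + ε * (∑ i, (y i + z i)) + τg * G (y + z)) :
    ∀ x : Fin n → ℝ,
      f (ystar - zstar) + ε * (∑ i, |ystar i - zstar i|) + τg * G (ystar - zstar) ≤
      f x + ε * (∑ i, |x i|) + τg * G x := by
  obtain rfl : G = groupLasso J := funext hG
  have hP := monotoneOn_mul_sum_add_mul_groupLasso J hε.le hτg.le
  have hsub := stmt_7_general (f := f) hP hy hz
    fun p hp ↦ by simpa [add_assoc] using hmin p.1 p.2 hp.1 hp.2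
  intro x
  simpa [groupLasso_abs, add_assoc] using hsub (mem_univ x)
end
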